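/- arXiv:2210.00785 — 3 statements merged into one kernel-verified Lean document; each statement's English description precedes it below -/
import Mathlib

section
/- Let V = (Q, T, ℓ) be a continuous VASS of dimension d, let x, y ∈ ℚ_{≥0}^d, and let χ be a cycle with p(x) →^χ p(y) in the nonnegative semantics. Then there exists a linear path scheme σ = π₀χ₁*π₁⋯χₙ*πₙ over V such that: n ≤ 2(|T| + d + 1) + 1; every π_i is a simple path; |χ_i| ≤ 2·|Q|·(d·|T|^{d+1} + 1) for all 1 ≤ i ≤ n; and y ∈ Reach^x_{≥0}(σ). (Lemma: short LPS for nonnegative reachability along iterations of a cycle.) -/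
open Pointwise

/-- A continuous VASS of dimension `d`: a finite set of states `Q`,
a finite set of transitions `T ⊆ Q × Q`, and a labelling of transitions
by vectors in `ℚ^d`. -/
structure CVASS (d : ℕ) where
  Q : Type
  [deceq : DecidableEq Q]
  [fin : Fintype Q]
  T : Finset (Q × Q)
  label : Q × Q → (Fin d → ℚ)

attribute [instance] CVASS.deceq CVASS.fin

namespace CVASS

variable {d : ℕ} (V : CVASS d)

/-- `V.PathFrom p π q` : the list of transitions `π` is a valid path of `V`
from state `p` to state `q`. -/
inductive PathFrom : V.Q → List (V.Q × V.Q) → V.Q → Prop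
  | nil (p : V.Q) : PathFrom p [] p
  | cons {p q r : V.Q} {rest : List (V.Q × V.Q)} :
      (p, q) ∈ V.T → PathFrom q rest r → PathFrom p ((p, q) :: rest) r

/-- `V.RunFrom p x π q y` : there is a run of `V` lifted from the path `π`,
starting in configuration `p(x)` and ending in configuration `q(y)`, where
each transition is scaled by some rational coefficient in `(0,1]`
(ℚ-semantics: counters may become negative). -/
inductive RunFrom : V.Q → (Fin d → ℚ) → List (V.Q × V.Q) → V.Q → (Fin d → ℚ) → Prop
  | nil (p : V.Q) (x : Fin d → ℚ) : RunFrom p x [] p x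
  | cons {p q r : V.Q} {x y : Fin d → ℚ} {α : ℚ} {rest : List (V.Q × V.Q)} :
      (p, q) ∈ V.T → 0 < α → α ≤ 1 →
      RunFrom q (x + α • V.label (p, q)) rest r y →
      RunFrom p x ((p, q) :: rest) r y

/-- `V.NNRunFrom p x π q y` : as `RunFrom`, but every configuration along the
run (including the first and the last one) must have nonnegative counters
(ℚ≥0-semantics). -/
inductive NNRunFrom : V.Q → (Fin d → ℚ) → List (V.Q × V.Q) → V.Q → (Fin d → ℚ) → Prop
  | nil (p : V.Q) (x : Fin d → ℚ) : (∀ i, 0 ≤ x i) → NNRunFrom p x [] p x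
  | cons {p q r : V.Q} {x y : Fin d → ℚ} {α : ℚ} {rest : List (V.Q × V.Q)} :
      (p, q) ∈ V.T → (∀ i, 0 ≤ x i) → 0 < α → α ≤ 1 →
      NNRunFrom q (x + α • V.label (p, q)) rest r y →
      NNRunFrom p x ((p, q) :: rest) r y

end CVASS

/-- The list of states visited by a path `π` starting at state `p`. -/
def pathStates {Q : Type} (p : Q) (π : List (Q × Q)) : List Q :=
  p :: π.map Prod.snd

/-- A path is simple if it visits no state twice. -/
def SimplePath {Q : Type} (p : Q) (π : List (Q × Q)) : Prop :=
  (pathStates p π).Nodup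

/-- A cycle is simple if it is nonempty and visits no state twice, except
that its first state equals its last state. -/
def SimpleCycle {Q : Type} (π : List (Q × Q)) : Prop :=
  π ≠ [] ∧ (π.map Prod.snd).Nodup

/-- The path `π₀ χ₁^{k₁} π₁ ⋯ χₙ^{kₙ} πₙ` determined by a linear path scheme
`π₀ χ₁* π₁ ⋯ χₙ* πₙ` (given by the paths `πs` and the cycles `χs`) and
exponents `ks`. -/
def lpsConcat {Q : Type} {n : ℕ} (πs : Fin (n + 1) → List (Q × Q))
    (χs : Fin n → List (Q × Q)) (ks : Fin n → ℕ) : List (Q × Q) :=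
  πs 0 ++ (List.ofFn fun i : Fin n =>
    (List.replicate (ks i) (χs i)).flatten ++ πs i.succ).flatten

/-!
Write `supp` for the set of nonzero counters and call a transition unlocked at `x` if it only
changes counters in `supp x`. Let `S` be the set of transitions of the cycle `χ`. The difference
`y - x` is a combination of the labels of `S` with positive weights, and sufficiently small firings
of transitions of `S` keep the remaining difference of this form. Follow `χ` from `x`: unlocked
transitions are merely collected into a path, and when a locked one is met, a shortcut of that path
and then the locked transition are fired with tiny coefficients. This makes all the counters changed
by that transition positive, so it happens at most `min d |T|` times, and at the end, at some `z`,
all of `S` is unlocked. The same argument backwards from `y` gives a `z'` at which `S` is unlocked.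
Finally a cycle `θ` of length at most `2 |Q| |T|` with exactly the transitions of `S`, iterated
often enough with small coefficients, leads from `z` to `z'`.
-/

open Filter Function Topology

section IsPosComb

variable {𝕜 ι E : Type*} [Field 𝕜] [LinearOrder 𝕜] [AddCommGroup E] [Module 𝕜 E]

/-- `v` is a linear combination of the vectors `l t`, `t ∈ S`, with all weights strictly positive.
For the labels of the transitions of a run, this is what the run says about its total displacement
once the order of its steps is forgotten. -/
def IsPosComb (𝕜 : Type*) {ι E : Type*} [Field 𝕜] [LinearOrder 𝕜] [AddCommGroup E] [Module 𝕜 E]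
    (l : ι → E) (S : Finset ι) (v : E) : Prop :=
  ∃ w : ι → 𝕜, (∀ t ∈ S, 0 < w t) ∧ v = ∑ t ∈ S, w t • l t

variable {l : ι → E} {S : Finset ι} {v : E}

theorem isPosComb_neg : IsPosComb 𝕜 (fun t ↦ -l t) S (-v) ↔ IsPosComb 𝕜 l S v := by
  simp only [IsPosComb, smul_neg, Finset.sum_neg_distrib, neg_inj]

theorem isPosComb_map {κ : Type*} {T : Finset κ} {e : κ ≃ ι} :
    IsPosComb 𝕜 l (T.map e.toEmbedding) v ↔ IsPosComb 𝕜 (l ∘ e) T v := by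
  constructor
  · rintro ⟨w, hw, rfl⟩
    exact ⟨w ∘ e, fun t ht ↦ hw _ (Finset.mem_map_of_mem _ ht), by simp⟩
  · rintro ⟨w, hw, rfl⟩
    exact ⟨w ∘ e.symm, Finset.forall_mem_map.2 fun t ht ↦ by simpa using hw t ht, by simp⟩

variable [IsStrictOrderedRing 𝕜]

theorem IsPosComb.smul_add [DecidableEq ι] (h : IsPosComb 𝕜 l S v) (t : ι) {α : 𝕜} (hα : 0 < α) :
    IsPosComb 𝕜 l (insert t S) (α • l t + v) := by
  obtain ⟨w, hw, rfl⟩ := h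
  refine ⟨fun s ↦ (if s = t then α else 0) + (if s ∈ S then w s else 0), fun s hs ↦ ?_, ?_⟩
  · by_cases hsS : s ∈ S
    · have := hw s hsS
      simp only [hsS, if_true]
      split_ifs <;> linarith
    · obtain rfl : s = t := (Finset.mem_insert.1 hs).resolve_right hsS
      simpa [hsS] using hα
  · simp [_root_.add_smul, Finset.sum_add_distrib, ite_smul,
      Finset.inter_eq_right.2 (Finset.subset_insert t S)]

theorem IsPosComb.eventually_sub_smul [TopologicalSpace 𝕜] [OrderTopology 𝕜]
    (h : IsPosComb 𝕜 l S v) {t : ι} (ht : t ∈ S) :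
    ∀ᶠ α in 𝓝 (0 : 𝕜), IsPosComb 𝕜 l S (v - α • l t) := by
  classical
  obtain ⟨w, hw, rfl⟩ := h
  filter_upwards [eventually_lt_nhds (hw t ht)] with α hα
  refine ⟨fun s ↦ w s - if s = t then α else 0, fun s hs ↦ ?_, ?_⟩
  · by_cases hst : s = t
    · simpa [hst] using hα
    · simpa [hst] using hw s hs
  · simp [sub_smul, Finset.sum_sub_distrib, ite_smul, ht]

theorem IsPosComb.exists_list_sum [DecidableEq ι] {L : List ι} (h : IsPosComb 𝕜 l L.toFinset v) :
    ∃ a : ι → 𝕜, (∀ t ∈ L, 0 < a t) ∧ (L.map fun t ↦ a t • l t).sum = v := by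
  obtain ⟨w, hw, rfl⟩ := h
  have hcount : ∀ t ∈ L, 0 < (L.count t : 𝕜) := fun t ht ↦ by
    exact_mod_cast List.count_pos_iff.2 ht
  refine ⟨fun t ↦ w t / L.count t,
    fun t ht ↦ div_pos (hw t (List.mem_toFinset.2 ht)) (hcount t ht), ?_⟩
  rw [Finset.sum_list_map_count]
  refine Finset.sum_congr rfl fun t ht ↦ ?_
  rw [← Nat.cast_smul_eq_nsmul 𝕜, smul_smul,
    mul_div_cancel₀ _ (hcount t (List.mem_toFinset.1 ht)).ne']

end IsPosComb

section Support

variable {𝕜 ι : Type*} [Field 𝕜] [LinearOrder 𝕜] [IsStrictOrderedRing 𝕜] [Finite ι]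

theorem eventually_nonneg_add_smul [TopologicalSpace 𝕜] [OrderTopology 𝕜] {x l : ι → 𝕜}
    (hx : 0 ≤ x) (hl : ∀ i, l i < 0 → x i ≠ 0) :
    ∀ᶠ α in 𝓝[>] (0 : 𝕜), 0 ≤ x + α • l ∧ support x ∪ support l ⊆ support (x + α • l) := by
  have key : ∀ i, ∀ᶠ α in 𝓝[>] (0 : 𝕜),
      0 ≤ x i + α * l i ∧ (x i ≠ 0 ∨ l i ≠ 0 → x i + α * l i ≠ 0) := by
    intro i
    rcases (hx i).eq_or_lt with hxi | hxi
    · have hxi : x i = 0 := hxi.symm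
      have hli : 0 ≤ l i := not_lt.1 fun h ↦ hl i h hxi
      filter_upwards [self_mem_nhdsWithin] with α (hα : 0 < α)
      simpa [hxi, hα.ne'] using mul_nonneg hα.le hli
    · have hcont : Tendsto (fun α ↦ x i + α * l i) (𝓝 0) (𝓝 (x i)) := by
        have : Continuous fun α ↦ x i + α * l i := by fun_prop
        simpa using this.tendsto 0
      filter_upwards [nhdsWithin_le_nhds (hcont.eventually_const_lt hxi)] with α hα
      exact ⟨hα.le, fun _ ↦ hα.ne'⟩
  filter_upwards [eventually_all.2 key] with α hα
  exact ⟨fun i ↦ (hα i).1, fun i hi ↦ (hα i).2 hi⟩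

theorem support_list_sum_subset {ι M : Type*} [AddMonoid M] {L : List (ι → M)} {s : Set ι}
    (h : ∀ f ∈ L, support f ⊆ s) : support L.sum ⊆ s :=
  List.sum_induction (fun f ↦ support f ⊆ s)
    (fun f g hf hg ↦ (support_add f g).trans (Set.union_subset hf hg)) (by simp) h

theorem eventually_le_natCast_smul [Archimedean 𝕜] {m x : ι → 𝕜} (hx : 0 ≤ x)
    (hm : support m ⊆ support x) : ∀ᶠ k : ℕ in atTop, m ≤ (k : 𝕜) • x := by
  refine eventually_all.2 fun i ↦ ?_
  rcases (hx i).eq_or_lt with hxi | hxi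
  · have hmi : m i = 0 := notMem_support.1 fun h ↦ hm h hxi.symm
    exact .of_forall fun k ↦ by simp [hmi, ← hxi]
  · exact (tendsto_natCast_atTop_atTop.atTop_mul_const hxi).eventually_ge_atTop (m i)

end Support

theorem simplePath_nil {Q : Type} (p : Q) : SimplePath p [] := by
  simp [SimplePath, pathStates]

theorem SimplePath.length_lt_card {Q : Type} [Fintype Q] {p : Q} {π : List (Q × Q)}
    (h : SimplePath p π) : π.length < Fintype.card Q := by
  simpa [pathStates] using List.Nodup.length_le_card h

/-- The path `π` traversed backwards. -/
def reversePath {Q : Type} (π : List (Q × Q)) : List (Q × Q) :=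
  (π.map Prod.swap).reverse

theorem length_reversePath {Q : Type} (π : List (Q × Q)) :
    (reversePath π).length = π.length := by
  simp [reversePath]

theorem reversePath_flatten_replicate {Q : Type} (k : ℕ) (π : List (Q × Q)) :
    reversePath (List.replicate k π).flatten = (List.replicate k (reversePath π)).flatten := by
  simp [reversePath, List.map_flatten, List.reverse_flatten]

theorem toFinset_reversePath {Q : Type} [DecidableEq Q] (π : List (Q × Q)) :
    (reversePath π).toFinset = π.toFinset.map (Equiv.prodComm Q Q).toEmbedding := by
  ext ⟨p, q⟩
  simp [reversePath]

namespace CVASS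

variable {d : ℕ} {V : CVASS d} {p q r : V.Q} {x y z : Fin d → ℚ} {π : List (V.Q × V.Q)}

/-! ### Paths -/

theorem PathFrom.append {σ : List (V.Q × V.Q)} (h : V.PathFrom p π q) (h' : V.PathFrom q σ r) :
    V.PathFrom p (π ++ σ) r := by
  induction h with
  | nil => exact h'
  | cons ht _ ih => exact .cons ht (ih h')

theorem PathFrom.singleton (ht : (p, q) ∈ V.T) : V.PathFrom p [(p, q)] q :=
  .cons ht (.nil q)

theorem PathFrom.mem_T (h : V.PathFrom p π q) : ∀ t ∈ π, t ∈ V.T := by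
  induction h with
  | nil => simp
  | cons ht _ ih => exact List.forall_mem_cons.2 ⟨ht, ih⟩

theorem PathFrom.exists_of_mem (h : V.PathFrom p π q) {t : V.Q × V.Q} (ht : t ∈ π) :
    ∃ σ τ, π = σ ++ t :: τ ∧ V.PathFrom p σ t.1 ∧ V.PathFrom t.2 τ q := by
  induction h with
  | nil => simp at ht
  | cons hT hπ ih =>
    rcases List.mem_cons.1 ht with rfl | ht
    · exact ⟨[], _, rfl, .nil _, hπ⟩
    · obtain ⟨σ, τ, rfl, hσ, hτ⟩ := ih ht
      exact ⟨_ :: σ, τ, rfl, .cons hT hσ, hτ⟩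

theorem PathFrom.exists_suffix_of_mem_pathStates (h : V.PathFrom q π r)
    (hp : p ∈ pathStates q π) :
    ∃ σ, V.PathFrom p σ r ∧ σ <:+ π ∧ pathStates p σ <:+ pathStates q π := by
  induction h with
  | nil =>
    obtain rfl : p = _ := by simpa [pathStates] using hp
    exact ⟨[], .nil _, List.suffix_rfl, List.suffix_rfl⟩
  | cons ht hπ ih =>
    rcases List.mem_cons.1 hp with rfl | hp
    · exact ⟨_, .cons ht hπ, List.suffix_rfl, List.suffix_rfl⟩
    · obtain ⟨σ, hσ, hsuff, hstates⟩ := ih hp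
      exact ⟨σ, hσ, hsuff.trans (List.suffix_cons _ _), hstates.trans (List.suffix_cons _ _)⟩

theorem PathFrom.exists_simplePath (h : V.PathFrom p π q) :
    ∃ σ, V.PathFrom p σ q ∧ SimplePath p σ ∧ σ ⊆ π := by
  induction h with
  | nil p => exact ⟨[], .nil p, simplePath_nil p, List.Subset.refl _⟩
  | @cons p q _ _ ht _ ih =>
    obtain ⟨σ, hσ, hsimple, hsub⟩ := ih
    by_cases hp : p ∈ pathStates q σ
    · obtain ⟨τ, hτ, hsuff, hstates⟩ := hσ.exists_suffix_of_mem_pathStates hp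
      exact ⟨τ, hτ, hsimple.sublist hstates.sublist,
        List.subset_cons_of_subset _ (List.Subset.trans hsuff.subset hsub)⟩
    · exact ⟨(p, q) :: σ, .cons ht hσ, List.nodup_cons.2 ⟨hp, hsimple⟩,
        List.cons_subset_cons _ hsub⟩

theorem PathFrom.exists_return_of_mem (h : V.PathFrom p π p) {t : V.Q × V.Q} (ht : t ∈ π) :
    ∃ τ, V.PathFrom t.2 τ t.1 ∧ τ.length < Fintype.card V.Q := by
  obtain ⟨σ, τ, -, hσ, hτ⟩ := h.exists_of_mem ht
  obtain ⟨ρ, hρ, hsimple, -⟩ := (hτ.append hσ).exists_simplePath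
  exact ⟨ρ, hρ, hsimple.length_lt_card⟩

theorem PathFrom.exists_short_cycle_through (h : V.PathFrom p π p) {t : V.Q × V.Q} (ht : t ∈ π) :
    ∃ θ, V.PathFrom p θ p ∧ t ∈ θ ∧ θ ⊆ π ∧ θ.length ≤ 2 * Fintype.card V.Q := by
  obtain ⟨σ, τ, rfl, hσ, hτ⟩ := h.exists_of_mem ht
  obtain ⟨σ', hσ', hσ_simple, hσ_sub⟩ := hσ.exists_simplePath
  obtain ⟨τ', hτ', hτ_simple, hτ_sub⟩ := hτ.exists_simplePath
  refine ⟨σ' ++ t :: τ', hσ'.append (.cons (h.mem_T t ht) hτ'), by simp, ?_, ?_⟩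
  · exact List.append_subset.2 ⟨List.subset_append_of_subset_left _ hσ_sub,
      List.subset_append_of_subset_right _ (List.cons_subset_cons _ hτ_sub)⟩
  · have hσ_length := hσ_simple.length_lt_card
    have hτ_length := hτ_simple.length_lt_card
    simp only [List.length_append, List.length_cons]
    omega

theorem PathFrom.exists_short_cycle_covering (h : V.PathFrom p π p) :
    ∃ θ, V.PathFrom p θ p ∧ θ.toFinset = π.toFinset ∧
      θ.length ≤ π.toFinset.card * (2 * Fintype.card V.Q) := by
  suffices key : ∀ S ⊆ π.toFinset, ∃ θ, V.PathFrom p θ p ∧ S ⊆ θ.toFinset ∧ θ ⊆ π ∧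
      θ.length ≤ S.card * (2 * Fintype.card V.Q) by
    obtain ⟨θ, hθ, hcover, hsub, hlen⟩ := key _ subset_rfl
    have hsub' : θ.toFinset ⊆ π.toFinset := fun _ ht ↦
      List.mem_toFinset.2 (hsub (List.mem_toFinset.1 ht))
    exact ⟨θ, hθ, hsub'.antisymm hcover, hlen⟩
  intro S
  induction S using Finset.induction_on with
  | empty => exact fun _ ↦ ⟨[], .nil p, by simp⟩
  | insert t S htS ih =>
    intro hS
    obtain ⟨htπ, hSπ⟩ := Finset.insert_subset_iff.1 hS
    obtain ⟨θ, hθ, hcover, hsub, hlen⟩ := ih hSπ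
    obtain ⟨η, hη, htη, hηsub, hηlen⟩ := h.exists_short_cycle_through (List.mem_toFinset.1 htπ)
    refine ⟨η ++ θ, hη.append hθ, ?_, List.append_subset.2 ⟨hηsub, hsub⟩, ?_⟩
    · rw [List.toFinset_append]
      exact Finset.insert_subset (Finset.mem_union_left _ (List.mem_toFinset.2 htη))
        (hcover.trans Finset.subset_union_right)
    · rw [Finset.card_insert_of_notMem htS, add_one_mul, List.length_append]
      omega

/-- `c` is a nonempty cycle at `q` of length at most `B`, as allowed in a linear path scheme. -/
structure IsShortCycle (V : CVASS d) (B : ℕ) (q : V.Q) (c : List (V.Q × V.Q)) : Prop where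
  pathFrom : V.PathFrom q c q
  ne_nil : c ≠ []
  length_le : c.length ≤ B

variable {B : ℕ}

theorem IsShortCycle.mono {B' : ℕ} {c : List (V.Q × V.Q)} (h : V.IsShortCycle B q c)
    (hB : B ≤ B') : V.IsShortCycle B' q c :=
  ⟨h.pathFrom, h.ne_nil, h.length_le.trans hB⟩

theorem PathFrom.isShortCycle_cons {τ : List (V.Q × V.Q)} (h : V.PathFrom q τ p)
    (ht : (p, q) ∈ V.T) (hlen : τ.length < B) : V.IsShortCycle B p ((p, q) :: τ) :=
  ⟨.cons ht h, List.cons_ne_nil _ _, hlen⟩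

theorem PathFrom.isShortCycle_concat {τ : List (V.Q × V.Q)} (h : V.PathFrom q τ p)
    (ht : (p, q) ∈ V.T) (hlen : τ.length < B) : V.IsShortCycle B q (τ ++ [(p, q)]) :=
  ⟨h.append (.singleton ht), by simp, by simpa using hlen⟩

/-! ### Nonnegative runs -/

theorem NNRunFrom.append {σ : List (V.Q × V.Q)} (h : V.NNRunFrom p x π q y)
    (h' : V.NNRunFrom q y σ r z) : V.NNRunFrom p x (π ++ σ) r z := by
  induction h with
  | nil => exact h'
  | cons ht hx hα hα' _ ih => exact .cons ht hx hα hα' (ih h')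

theorem NNRunFrom.nonneg_left (h : V.NNRunFrom p x π q y) : 0 ≤ x := by
  cases h with
  | nil _ _ hx => exact hx
  | cons _ hx => exact hx

theorem NNRunFrom.nonneg_right (h : V.NNRunFrom p x π q y) : 0 ≤ y := by
  induction h with
  | nil _ _ hx => exact hx
  | cons _ _ _ _ _ ih => exact ih

theorem NNRunFrom.pathFrom (h : V.NNRunFrom p x π q y) : V.PathFrom p π q := by
  induction h with
  | nil => exact .nil _
  | cons ht _ _ _ _ ih => exact .cons ht ih

theorem NNRunFrom.singleton {α : ℚ} (ht : (p, q) ∈ V.T) (hα : 0 < α) (hα' : α ≤ 1) (hx : 0 ≤ x)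
    (hy : 0 ≤ x + α • V.label (p, q)) :
    V.NNRunFrom p x [(p, q)] q (x + α • V.label (p, q)) :=
  .cons ht hx hα hα' (.nil _ _ hy)

theorem NNRunFrom.isPosComb (h : V.NNRunFrom p x π q y) :
    IsPosComb ℚ V.label π.toFinset (y - x) := by
  induction h with
  | nil => exact ⟨fun _ ↦ 1, by simp⟩
  | @cons p q _ x y α _ _ _ hα _ _ ih =>
    rw [List.toFinset_cons]
    convert ih.smul_add (p, q) hα using 1
    abel

/-! ### Firing with small coefficients -/

section Fire

variable {S : Finset (V.Q × V.Q)} {g : Fin d → ℚ}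

theorem exists_nnRunFrom_singleton (hx : 0 ≤ x) (hg : IsPosComb ℚ V.label S (g - x))
    (htT : (p, q) ∈ V.T) (htS : (p, q) ∈ S) (hl : ∀ i, V.label (p, q) i < 0 → x i ≠ 0) :
    ∃ z, V.NNRunFrom p x [(p, q)] q z ∧ support x ∪ support (V.label (p, q)) ⊆ support z ∧
      IsPosComb ℚ V.label S (g - z) := by
  obtain ⟨α, ⟨⟨⟨hz, hsupp⟩, hcomb⟩, hα⟩, hα'⟩ :=
    ((((eventually_nonneg_add_smul hx hl).and
      (nhdsWithin_le_nhds (hg.eventually_sub_smul htS))).and self_mem_nhdsWithin).and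
      (nhdsWithin_le_nhds (eventually_le_nhds one_pos))).exists
  exact ⟨_, .singleton htT hα hα' hx hz, hsupp, by rwa [← sub_sub]⟩

theorem PathFrom.exists_nnRunFrom (h : V.PathFrom p π q) (hx : 0 ≤ x)
    (hg : IsPosComb ℚ V.label S (g - x))
    (hπ : ∀ t ∈ π, t ∈ S ∧ support (V.label t) ⊆ support x) :
    ∃ z, V.NNRunFrom p x π q z ∧ support x ⊆ support z ∧ IsPosComb ℚ V.label S (g - z) := by
  induction h generalizing x with
  | nil => exact ⟨x, .nil _ _ hx, subset_rfl, hg⟩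
  | cons htT _ ih =>
    obtain ⟨⟨htS, ht⟩, hπ⟩ := List.forall_mem_cons.1 hπ
    obtain ⟨z, hrun, hsupp, hgz⟩ :=
      exists_nnRunFrom_singleton hx hg htT htS fun i hi ↦ ht hi.ne
    have hxz := Set.subset_union_left.trans hsupp
    obtain ⟨z', hrun', hsupp', hgz'⟩ :=
      ih hrun.nonneg_right hgz fun s hs ↦ ⟨(hπ s hs).1, (hπ s hs).2.trans hxz⟩
    exact ⟨z', hrun.append hrun', hxz.trans hsupp', hgz'⟩

end Fire

/-! ### Runs along linear path schemes -/

/-- There is a run from `p(x)` to `q(y)` along some `π₀ χ₁^{k₁} π₁ ⋯ χₙ^{kₙ} πₙ` whose `πᵢ` are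
simple paths and whose `χᵢ` are nonempty cycles of length at most `B`. The inductive form lets
linear path schemes be concatenated and reversed without `Fin`-indexed families. -/
inductive LPSRun (V : CVASS d) (B : ℕ) :
    V.Q → (Fin d → ℚ) → ℕ → V.Q → (Fin d → ℚ) → Prop
  | simple {p q : V.Q} {x y : Fin d → ℚ} {π : List (V.Q × V.Q)} :
      SimplePath p π → V.NNRunFrom p x π q y → LPSRun V B p x 0 q y
  | cons {p q r : V.Q} {x y z w : Fin d → ℚ} {π c : List (V.Q × V.Q)} {n : ℕ} (k : ℕ) :
      SimplePath p π → V.NNRunFrom p x π q y → V.IsShortCycle B q c →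
      V.NNRunFrom q y (List.replicate k c).flatten q z →
      LPSRun V B q z n r w → LPSRun V B p x (n + 1) r w

namespace LPSRun

variable {w : Fin d → ℚ} {c : List (V.Q × V.Q)} {n m : ℕ}

theorem refl (p : V.Q) (hx : 0 ≤ x) : V.LPSRun B p x 0 p x :=
  .simple (simplePath_nil p) (.nil p x hx)

theorem mono {B' : ℕ} (h : V.LPSRun B p x n q y) (hB : B ≤ B') : V.LPSRun B' p x n q y := by
  induction h with
  | simple hs hπ => exact .simple hs hπ
  | cons k hs hπ hc hk _ ih => exact .cons k hs hπ (hc.mono hB) hk ih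

theorem nonneg_right (h : V.LPSRun B p x n q y) : 0 ≤ y := by
  induction h with
  | simple _ hπ => exact hπ.nonneg_right
  | cons _ _ _ _ _ _ ih => exact ih

theorem append (h : V.LPSRun B p x n q y) (hc : V.IsShortCycle B q c) (k : ℕ)
    (hk : V.NNRunFrom q y (List.replicate k c).flatten q z) (h' : V.LPSRun B q z m r w) :
    V.LPSRun B p x (n + m + 1) r w := by
  induction h with
  | simple hs hπ => simpa using LPSRun.cons k hs hπ hc hk h'
  | @cons _ _ _ _ _ _ _ _ _ n j hs hπ hc' hj _ ih =>
    rw [show n + 1 + m + 1 = n + m + 1 + 1 by omega]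
    exact .cons j hs hπ hc' hj (ih hc hk h')

theorem append_of_isShortCycle (h : V.LPSRun B p x n q y) (hc : V.IsShortCycle B q c)
    (h' : V.LPSRun B q y m r w) : V.LPSRun B p x (n + m + 1) r w :=
  h.append hc 0 (.nil q y h.nonneg_right) h'

theorem exists_lpsConcat (h : V.LPSRun B p x n q y) :
    ∃ (s : Fin (n + 2) → V.Q) (πs : Fin (n + 1) → List (V.Q × V.Q))
      (χs : Fin n → List (V.Q × V.Q)),
      s 0 = p ∧ s (Fin.last (n + 1)) = q ∧
      (∀ i : Fin (n + 1), V.PathFrom (s i.castSucc) (πs i) (s i.succ)) ∧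
      (∀ i : Fin (n + 1), SimplePath (s i.castSucc) (πs i)) ∧
      (∀ i : Fin n, V.PathFrom (s i.succ.castSucc) (χs i) (s i.succ.castSucc) ∧ χs i ≠ []) ∧
      (∀ i : Fin n, (χs i).length ≤ B) ∧
      (∃ ks : Fin n → ℕ, V.NNRunFrom p x (lpsConcat πs χs ks) q y) := by
  induction h with
  | @simple p q _ _ π hs hπ =>
    exact ⟨![p, q], fun _ ↦ π, Fin.elim0, rfl, rfl, by simpa using hπ.pathFrom, by simpa using hs,
      Fin.rec0, Fin.rec0, Fin.elim0, by simpa [lpsConcat] using hπ⟩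
  | @cons p _ _ _ _ _ _ π c n k hs hπ hc hk _ ih =>
    obtain ⟨s, πs, χs, hs_zero, hs_last, hpath, hsimple, hcycle, hlength, ks, hrun⟩ := ih
    refine ⟨Fin.cons p s, Fin.cons π πs, Fin.cons c χs, rfl, ?_, ?_, ?_, ?_, ?_,
      Fin.cons k ks, ?_⟩
    · rw [← Fin.succ_last, Fin.cons_succ, hs_last]
    · refine Fin.cases ?_ fun i ↦ ?_
      · simpa [hs_zero] using hπ.pathFrom
      · simpa [Fin.castSucc_succ] using hpath i
    · refine Fin.cases ?_ fun i ↦ ?_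
      · simpa using hs
      · simpa [Fin.castSucc_succ] using hsimple i
    · refine Fin.cases ?_ fun i ↦ ?_
      · simpa [Fin.castSucc_succ, hs_zero] using ⟨hc.pathFrom, hc.ne_nil⟩
      · simpa only [Fin.castSucc_succ, Fin.cons_succ] using hcycle i
    · exact Fin.cases hc.length_le hlength
    · simpa [lpsConcat, List.ofFn_succ] using hπ.append (hk.append hrun)

end LPSRun

/-! ### Unlocking all transitions of a run -/

open Classical in
/-- The number of zero counters plus the number of transitions that change one of them. Firing a
locked transition costs two cycles of a linear path scheme, and it lowers both summands. -/
noncomputable def deficit (V : CVASS d) (x : Fin d → ℚ) : ℕ :=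
  {i | x i = 0}.ncard + {t ∈ V.T | ¬ support (V.label t) ⊆ support x}.card

theorem deficit_le (V : CVASS d) (x : Fin d → ℚ) : V.deficit x ≤ V.T.card + d := by
  classical
  have hcounters : {i | x i = 0}.ncard ≤ d := by
    simpa using Set.ncard_le_card {i | x i = 0}
  have htransitions := Finset.card_filter_le V.T fun t ↦ ¬ support (V.label t) ⊆ support x
  unfold deficit
  omega

theorem deficit_add_two_le {t : V.Q × V.Q} (htT : t ∈ V.T) (hxz : support x ⊆ support z)
    (hx : ¬ support (V.label t) ⊆ support x) (hz : support (V.label t) ⊆ support z) :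
    V.deficit z + 2 ≤ V.deficit x := by
  classical
  obtain ⟨i, hi, hxi⟩ := Set.not_subset.1 hx
  have hcounters : {i | z i = 0}.ncard < {i | x i = 0}.ncard :=
    Set.ncard_lt_ncard ⟨fun j hj ↦ by_contra fun h ↦ hxz h hj,
      fun h ↦ hz hi (h (notMem_support.1 hxi))⟩
  have htransitions : {t ∈ V.T | ¬ support (V.label t) ⊆ support z}.card <
      {t ∈ V.T | ¬ support (V.label t) ⊆ support x}.card := by
    refine Finset.card_lt_card ((Finset.ssubset_iff_of_subset ?_).2 ⟨t, ?_, ?_⟩)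
    · exact Finset.monotone_filter_right _ fun s _ hs h ↦ hs (h.trans hxz)
    · exact Finset.mem_filter.2 ⟨htT, hx⟩
    · exact fun h ↦ (Finset.mem_filter.1 h).2 hz
  unfold deficit
  omega

section Unlock

variable {S : Finset (V.Q × V.Q)} {g : Fin d → ℚ}

theorem PathFrom.exists_lpsRun_zero (h : V.PathFrom p π q) (hx : 0 ≤ x)
    (hg : IsPosComb ℚ V.label S (g - x))
    (hπ : ∀ t ∈ π, t ∈ S ∧ support (V.label t) ⊆ support x) :
    ∃ z, V.LPSRun B p x 0 q z ∧ support x ⊆ support z ∧ IsPosComb ℚ V.label S (g - z) := by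
  obtain ⟨σ, hσ, hsimple, hsub⟩ := h.exists_simplePath
  obtain ⟨z, hrun, hsupp, hgz⟩ := hσ.exists_nnRunFrom hx hg fun t ht ↦ hπ t (hsub ht)
  exact ⟨z, .simple hsimple hrun, hsupp, hgz⟩

theorem PathFrom.exists_lpsRun_one {c : List (V.Q × V.Q)} (h : V.PathFrom p π q) (hx : 0 ≤ x)
    (hg : IsPosComb ℚ V.label S (g - x))
    (hπ : ∀ t ∈ π, t ∈ S ∧ support (V.label t) ⊆ support x)
    (htT : (q, r) ∈ V.T) (htS : (q, r) ∈ S) (hl : ∀ i, V.label (q, r) i < 0 → x i ≠ 0)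
    (hc : V.IsShortCycle B q c) :
    ∃ z, V.LPSRun B p x 1 r z ∧ support x ∪ support (V.label (q, r)) ⊆ support z ∧
      IsPosComb ℚ V.label S (g - z) := by
  obtain ⟨y, hxy, hsupp, hgy⟩ := h.exists_lpsRun_zero (B := B) hx hg hπ
  obtain ⟨z, hyz, hsupp', hgz⟩ :=
    exists_nnRunFrom_singleton hxy.nonneg_right hgy htT htS fun i hi ↦ hsupp (hl i hi)
  refine ⟨z, ?_, (Set.union_subset_union_left _ hsupp).trans hsupp', hgz⟩
  by_cases hqr : q = r
  -- A self-loop is not a simple path, but it is a cycle, to be iterated once.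
  · subst hqr
    have hB : 1 ≤ B := (List.length_pos_iff.2 hc.ne_nil).trans_le hc.length_le
    exact hxy.append ⟨.singleton htT, List.cons_ne_nil _ _, hB⟩ 1 (by simpa using hyz)
      (.refl q hyz.nonneg_right)
  · exact hxy.append_of_isShortCycle hc (.simple (by simpa [SimplePath, pathStates] using hqr) hyz)

/- The given run starts at `u`, whose support is contained in that of `x`, so each of its
transitions can be fired when it is met in the simulation from `x`. The path `σ` holds the unlocked
transitions that have been read but not fired yet. -/
theorem NNRunFrom.exists_lpsRun_unlocking {p' : V.Q} {u v : Fin d → ℚ} {σ : List (V.Q × V.Q)}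
    (hrun : V.NNRunFrom q u π r v) (hux : support u ⊆ support x)
    (hσ : V.PathFrom p' σ q) (hσS : ∀ t ∈ σ, t ∈ S ∧ support (V.label t) ⊆ support x)
    (hπS : ∀ t ∈ π, t ∈ S) (hS : ∀ t ∈ S, ∃ τ, V.PathFrom t.2 τ t.1 ∧ τ.length < B)
    (hx : 0 ≤ x) (hg : IsPosComb ℚ V.label S (g - x)) :
    ∃ n z, n ≤ V.deficit x ∧ V.LPSRun B p' x n r z ∧ support x ⊆ support z ∧
      (∀ t ∈ π, support (V.label t) ⊆ support z) ∧ IsPosComb ℚ V.label S (g - z) := by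
  induction hrun generalizing p' σ x with
  | nil =>
    obtain ⟨z, hxz, hsupp, hgz⟩ := hσ.exists_lpsRun_zero hx hg hσS
    exact ⟨0, z, Nat.zero_le _, hxz, hsupp, by simp, hgz⟩
  | @cons q q' r u v α π htT _ hα _ hrun ih =>
    obtain ⟨htS, hπS⟩ := List.forall_mem_cons.1 hπS
    have hu' : support (u + α • V.label (q, q')) ⊆ support u ∪ support (V.label (q, q')) :=
      (support_add _ _).trans (Set.union_subset_union_right _ (support_const_smul_subset α _))
    by_cases ht : support (V.label (q, q')) ⊆ support x
    · obtain ⟨n, z, hn, hxz, hsupp, hπz, hgz⟩ := ih (hu'.trans (Set.union_subset hux ht))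
        (hσ.append (.singleton htT))
        (List.forall_mem_append.2 ⟨hσS, List.forall_mem_singleton.2 ⟨htS, ht⟩⟩) hπS hx hg
      exact ⟨n, z, hn, hxz, hsupp, List.forall_mem_cons.2 ⟨ht.trans hsupp, hπz⟩, hgz⟩
    · obtain ⟨τ, hτ, hτB⟩ := hS _ htS
      have hl : ∀ i, V.label (q, q') i < 0 → x i ≠ 0 := fun i hi ↦ hux fun hui ↦ by
        have hnext : 0 ≤ u i + α * V.label (q, q') i := hrun.nonneg_left i
        rw [hui, zero_add] at hnext
        exact (mul_neg_of_pos_of_neg hα hi).not_ge hnext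
      obtain ⟨y, hxy, hsupp, hgy⟩ := hσ.exists_lpsRun_one hx hg hσS htT htS hl
        (hτ.isShortCycle_cons htT hτB)
      obtain ⟨hxy_supp, hty⟩ := Set.union_subset_iff.1 hsupp
      obtain ⟨n, z, hn, hyz, hyz_supp, hπz, hgz⟩ := ih
        (hu'.trans ((Set.union_subset_union_left _ hux).trans hsupp)) (.nil q') (by simp) hπS
        hxy.nonneg_right hgy
      refine ⟨1 + n + 1, z, ?_,
        hxy.append_of_isShortCycle (hτ.isShortCycle_concat htT hτB) hyz,
        hxy_supp.trans hyz_supp, List.forall_mem_cons.2 ⟨hty.trans hyz_supp, hπz⟩, hgz⟩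
      have := deficit_add_two_le htT hxy_supp ht hty
      omega

theorem NNRunFrom.exists_lpsRun_unlocked (hrun : V.NNRunFrom p x π p y)
    (hg : IsPosComb ℚ V.label π.toFinset (g - x)) :
    ∃ n z, n ≤ V.T.card + d ∧ V.LPSRun (Fintype.card V.Q) p x n p z ∧
      (∀ t ∈ π, support (V.label t) ⊆ support z) ∧
      IsPosComb ℚ V.label π.toFinset (g - z) := by
  obtain ⟨n, z, hn, hxz, -, hπz, hgz⟩ := hrun.exists_lpsRun_unlocking subset_rfl (.nil p)
    (by simp) (fun _ ↦ List.mem_toFinset.2)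
    (fun _ ht ↦ hrun.pathFrom.exists_return_of_mem (List.mem_toFinset.1 ht)) hrun.nonneg_left hg
  exact ⟨n, z, hn.trans (V.deficit_le x), hxz, hπz, hgz⟩

end Unlock

/-! ### Iterating a cycle -/

theorem PathFrom.nnRunFrom_of_sum_abs_le (h : V.PathFrom p π q) {b : V.Q × V.Q → ℚ}
    (hb : ∀ t ∈ π, 0 < b t ∧ b t ≤ 1) (hx : (π.map fun t ↦ b t • |V.label t|).sum ≤ x) :
    V.NNRunFrom p x π q (x + (π.map fun t ↦ b t • V.label t).sum) := by
  induction h generalizing x with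
  | nil => simpa using NNRunFrom.nil _ x hx
  | @cons p q _ π htT _ ih =>
    obtain ⟨⟨ht, ht'⟩, hπ⟩ := List.forall_mem_cons.1 hb
    have hrest : 0 ≤ (π.map fun t ↦ b t • |V.label t|).sum :=
      List.sum_nonneg (List.forall_mem_map.2 fun t ht ↦ smul_nonneg (hπ t ht).1.le (abs_nonneg _))
    have habs : b (p, q) • -V.label (p, q) ≤ b (p, q) • |V.label (p, q)| :=
      smul_le_smul_of_nonneg_left (neg_le_abs _) ht.le
    have hfirst : 0 ≤ b (p, q) • |V.label (p, q)| := smul_nonneg ht.le (abs_nonneg _)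
    simp only [List.map_cons, List.sum_cons] at hx ⊢
    rw [← add_assoc]
    refine .cons htT ((add_nonneg hfirst hrest).trans hx) ht ht' (ih hπ ?_)
    rw [smul_neg] at habs
    calc (π.map fun t ↦ b t • |V.label t|).sum
        ≤ x - b (p, q) • |V.label (p, q)| := le_sub_iff_add_le'.2 hx
      _ ≤ x + b (p, q) • V.label (p, q) := by
        rw [← sub_neg_eq_add]
        exact sub_le_sub_left habs x

theorem PathFrom.nnRunFrom_of_smul_sum_abs_le (h : V.PathFrom p π q) {ε : ℚ} (hε : 0 < ε)
    {a : V.Q × V.Q → ℚ} (ha : ∀ t ∈ π, 0 < a t ∧ ε * a t ≤ 1)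
    (hx : ε • (π.map fun t ↦ a t • |V.label t|).sum ≤ x) :
    V.NNRunFrom p x π q (x + ε • (π.map fun t ↦ a t • V.label t).sum) := by
  have hscale : ∀ f : V.Q × V.Q → Fin d → ℚ,
      ε • (π.map fun t ↦ a t • f t).sum = (π.map fun t ↦ (ε * a t) • f t).sum :=
    fun f ↦ by simp [List.smul_sum, mul_smul, comp_def]
  rw [hscale] at hx ⊢
  exact h.nnRunFrom_of_sum_abs_le
    (fun t ht ↦ ⟨mul_pos hε (ha t ht).1, (ha t ht).2⟩) hx

theorem NNRunFrom.replicate {s : Fin d → ℚ} (k : ℕ) (hx : 0 ≤ x)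
    (h : ∀ j < k, V.NNRunFrom p (x + (j : ℚ) • s) π p (x + ((j + 1 : ℕ) : ℚ) • s)) :
    V.NNRunFrom p x (List.replicate k π).flatten p (x + (k : ℚ) • s) := by
  induction k with
  | zero => simpa using NNRunFrom.nil p x hx
  | succ k ih =>
    rw [List.replicate_succ', List.flatten_concat]
    exact (ih fun j hj ↦ h j (hj.trans k.lt_succ_self)).append (h k k.lt_succ_self)

/- With coefficients of order `1 / k`, a pass through the cycle moves the counters by `O(1 / k)`,
and the passes start on the segment from `x` to `y`, so no counter gets below zero. -/
theorem PathFrom.exists_nnRunFrom_replicate (h : V.PathFrom p π p) (hx : 0 ≤ x) (hy : 0 ≤ y)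
    (hπx : ∀ t ∈ π, support (V.label t) ⊆ support x)
    (hπy : ∀ t ∈ π, support (V.label t) ⊆ support y)
    (hxy : IsPosComb ℚ V.label π.toFinset (y - x)) :
    ∃ k, V.NNRunFrom p x (List.replicate k π).flatten p y := by
  obtain ⟨a, ha, hsum⟩ := hxy.exists_list_sum
  set m := (π.map fun t ↦ a t • |V.label t|).sum with hm
  have hm_supp : ∀ u : Fin d → ℚ, (∀ t ∈ π, support (V.label t) ⊆ support u) →
      support m ⊆ support u := fun u hu ↦
    support_list_sum_subset <| List.forall_mem_map.2 fun t ht ↦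
      (support_const_smul_subset (a t) |V.label t|).trans fun i hi ↦ hu t ht (by simpa using hi)
  have hak : ∀ᶠ k : ℕ in atTop, ∀ t ∈ π.toFinset, a t ≤ k :=
    (eventually_all_finset _).2 fun t _ ↦ tendsto_natCast_atTop_atTop.eventually_ge_atTop (a t)
  obtain ⟨k, ⟨⟨hkx, hky⟩, hak⟩, hk⟩ :=
    (((eventually_le_natCast_smul (𝕜 := ℚ) hx (hm_supp x hπx)).and
      (eventually_le_natCast_smul (𝕜 := ℚ) hy (hm_supp y hπy))).and hak).and
      (eventually_gt_atTop 0) |>.exists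
  have hk : (0 : ℚ) < k := Nat.cast_pos.2 hk
  have hcoeff : ∀ t ∈ π, 0 < a t ∧ (k : ℚ)⁻¹ * a t ≤ 1 := fun t ht ↦
    ⟨ha t ht, inv_mul_le_one_of_le₀ (hak t (List.mem_toFinset.2 ht)) hk.le⟩
  have hpass : ∀ j < k, V.NNRunFrom p (x + (j : ℚ) • (k : ℚ)⁻¹ • (y - x)) π p
      (x + ((j + 1 : ℕ) : ℚ) • (k : ℚ)⁻¹ • (y - x)) := by
    intro j hj
    have hseg : (k : ℚ)⁻¹ • m ≤ x + ((j : ℚ) * (k : ℚ)⁻¹) • (y - x) :=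
      (convex_Ici ((k : ℚ)⁻¹ • m)).add_smul_sub_mem ((inv_smul_le_iff_of_pos hk).2 hkx)
        ((inv_smul_le_iff_of_pos hk).2 hky)
        ⟨by positivity, mul_inv_le_one_of_le₀ (by exact_mod_cast hj.le) hk.le⟩
    rw [← smul_smul, hm] at hseg
    convert h.nnRunFrom_of_smul_sum_abs_le (inv_pos.2 hk) hcoeff hseg using 1
    rw [hsum]
    push_cast
    module
  refine ⟨k, ?_⟩
  have := NNRunFrom.replicate k hx hpass
  rwa [smul_inv_smul₀ hk.ne', add_sub_cancel] at this

/-! ### Time reversal -/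

/-- The VASS whose runs are the runs of `V` traversed backwards. It is reducible so that its states
are seen to be those of `V`. -/
abbrev reverse (V : CVASS d) : CVASS d where
  Q := V.Q
  T := V.T.map (Equiv.prodComm V.Q V.Q).toEmbedding
  label t := -V.label t.swap

theorem reverse_reverse (V : CVASS d) : V.reverse.reverse = V := by
  obtain ⟨Q, T, label⟩ := V
  simp [Finset.map_map]

theorem swap_mem_reverse_T (ht : (p, q) ∈ V.T) : (q, p) ∈ V.reverse.T := by
  simpa using ht

theorem PathFrom.reverse (h : V.PathFrom p π q) : V.reverse.PathFrom q (reversePath π) p := by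
  induction h with
  | nil => exact .nil _
  | cons ht _ ih => simpa [reversePath] using ih.append (.singleton (swap_mem_reverse_T ht))

theorem PathFrom.pathStates_reversePath (h : V.PathFrom p π q) :
    pathStates q (reversePath π) = (pathStates p π).reverse := by
  induction h with
  | nil => rfl
  | cons _ _ ih =>
    simp only [pathStates, reversePath, List.map_cons, List.reverse_cons, List.map_append,
      List.map_nil, Prod.swap_prod_mk, ← List.cons_append] at ih ⊢
    rw [ih]

theorem PathFrom.simplePath_reversePath (h : V.PathFrom p π q) (hs : SimplePath p π) :
    SimplePath q (reversePath π) := by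
  rw [SimplePath, h.pathStates_reversePath]
  exact List.nodup_reverse.2 hs

theorem NNRunFrom.reverse (h : V.NNRunFrom p x π q y) :
    V.reverse.NNRunFrom q y (reversePath π) p x := by
  induction h with
  | nil _ _ hx => exact .nil _ _ hx
  | @cons p q _ x _ α _ ht hx hα hα' hrun ih =>
    have hback : x + α • V.label (p, q) + α • V.reverse.label (q, p) = x := by simp
    have hstep := NNRunFrom.singleton (swap_mem_reverse_T ht) hα hα' hrun.nonneg_left
      (hback.symm ▸ hx)
    rw [hback] at hstep
    simpa [reversePath] using ih.append hstep

theorem IsShortCycle.reverse {c : List (V.Q × V.Q)} (h : V.IsShortCycle B q c) :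
    V.reverse.IsShortCycle B q (reversePath c) :=
  ⟨h.pathFrom.reverse, by simpa [reversePath] using h.ne_nil,
    (length_reversePath c).trans_le h.length_le⟩

theorem LPSRun.reverse {n : ℕ} (h : V.LPSRun B p x n q y) : V.reverse.LPSRun B q y n p x := by
  induction h with
  | simple hs hπ => exact .simple (hπ.pathFrom.simplePath_reversePath hs) hπ.reverse
  | cons k hs hπ hc hk _ ih =>
    refine ih.append hc.reverse k ?_
      (.simple (hπ.pathFrom.simplePath_reversePath hs) hπ.reverse)
    rw [← reversePath_flatten_replicate]
    exact hk.reverse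

theorem LPSRun.of_reverse {n : ℕ} (h : V.reverse.LPSRun B q y n p x) : V.LPSRun B p x n q y := by
  convert h.reverse using 1
  exact V.reverse_reverse.symm

theorem isPosComb_reverse {v : Fin d → ℚ} :
    IsPosComb ℚ V.reverse.label (reversePath π).toFinset (-v) ↔
      IsPosComb ℚ V.label π.toFinset v := by
  rw [toFinset_reversePath, isPosComb_map, ← isPosComb_neg (l := V.label)]
  rfl

theorem support_label_subset_of_reverse
    (h : ∀ t ∈ reversePath π, support (V.reverse.label t) ⊆ support x) :
    ∀ t ∈ π, support (V.label t) ⊆ support x := fun t ht ↦ by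
  simpa using h t.swap (by simpa [reversePath] using ht)

/-! ### Short linear path schemes -/

theorem NNRunFrom.exists_lpsRun_of_cycle (hrun : V.NNRunFrom p x π p y) (hne : π ≠ []) :
    ∃ n ≤ 2 * (V.T.card + d) + 1, V.LPSRun (2 * Fintype.card V.Q * V.T.card) p x n p y := by
  obtain ⟨θ, hθ, hθπ, hθ_length⟩ := hrun.pathFrom.exists_short_cycle_covering
  have hθ_mem : ∀ t ∈ θ, t ∈ π := fun t ht ↦ List.mem_toFinset.1 (hθπ ▸ List.mem_toFinset.2 ht)
  have hπT : π.toFinset ⊆ V.T := fun t ht ↦ hrun.pathFrom.mem_T t (List.mem_toFinset.1 ht)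
  have hT : 0 < V.T.card :=
    (Finset.card_pos.2 (List.toFinset_nonempty_iff π |>.2 hne)).trans_le (Finset.card_le_card hπT)
  have hB : Fintype.card V.Q ≤ 2 * Fintype.card V.Q * V.T.card := by nlinarith
  have hθ_short : V.IsShortCycle (2 * Fintype.card V.Q * V.T.card) p θ := by
    refine ⟨hθ, fun h ↦ hne (List.toFinset_eq_empty_iff π |>.1 (by simp [← hθπ, h])), ?_⟩
    exact hθ_length.trans
      ((Nat.mul_le_mul_right _ (Finset.card_le_card hπT)).trans_eq (mul_comm _ _))
  obtain ⟨n, z, hn, hxz, hπz, hzy⟩ := hrun.exists_lpsRun_unlocked hrun.isPosComb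
  obtain ⟨m, z', hm, hyz', hπz', hz'z⟩ := hrun.reverse.exists_lpsRun_unlocked (g := z)
    (by rw [← neg_sub, isPosComb_reverse]; exact hzy)
  rw [← neg_sub, isPosComb_reverse, ← hθπ] at hz'z
  replace hπz' := support_label_subset_of_reverse (V := V) hπz'
  obtain ⟨k, hk⟩ := hθ.exists_nnRunFrom_replicate hxz.nonneg_right hyz'.nonneg_right
    (fun t ht ↦ hπz t (hθ_mem t ht)) (fun t ht ↦ hπz' t (hθ_mem t ht)) hz'z
  refine ⟨n + m + 1, ?_, (hxz.mono hB).append hθ_short k hk (hyz'.mono hB).of_reverse⟩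
  rw [Finset.card_map] at hm
  omega

end CVASS

/-- short LPS for nonnegative reachability along a cycle.
If `χ` is a cycle at `p` and `p(x) →^χ p(y)` in the nonnegative semantics,
then there is a linear path scheme `σ = π₀ χ₁* π₁ ⋯ χₙ* πₙ` from `p` to `p`
with `n ≤ 2(|T| + d + 1) + 1`, simple paths, cycles of length at most
`2·|Q|·(d·|T|^(d+1) + 1)`, and `y ∈ Reach^x_{≥0}(σ)`. -/
theorem short_lps_for_cycle_nonneg {d : ℕ} (V : CVASS d) (p : V.Q)
    (x y : Fin d → ℚ) (hx : ∀ i, 0 ≤ x i) (hy : ∀ i, 0 ≤ y i)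
    (χ : List (V.Q × V.Q)) (hne : χ ≠ []) (hcyc : V.PathFrom p χ p)
    (hrun : V.NNRunFrom p x χ p y) :
    ∃ (n : ℕ) (s : Fin (n + 2) → V.Q) (πs : Fin (n + 1) → List (V.Q × V.Q))
      (χs : Fin n → List (V.Q × V.Q)),
      n ≤ 2 * (V.T.card + d + 1) + 1 ∧
      s 0 = p ∧ s (Fin.last (n + 1)) = p ∧
      (∀ i : Fin (n + 1), V.PathFrom (s i.castSucc) (πs i) (s i.succ)) ∧
      (∀ i : Fin (n + 1), SimplePath (s i.castSucc) (πs i)) ∧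
      (∀ i : Fin n, V.PathFrom (s i.succ.castSucc) (χs i) (s i.succ.castSucc) ∧
        χs i ≠ []) ∧
      (∀ i : Fin n, (χs i).length ≤
        2 * Fintype.card V.Q * (d * V.T.card ^ (d + 1) + 1)) ∧
      (∃ ks : Fin n → ℕ, V.NNRunFrom p x (lpsConcat πs χs ks) p y) := by
  rcases d.eq_zero_or_pos with rfl | hd
  · obtain rfl : x = y := Subsingleton.elim x y
    obtain ⟨s, πs, χs, hσ⟩ := (CVASS.LPSRun.refl p hx).exists_lpsConcat
    exact ⟨0, s, πs, χs, Nat.zero_le _, hσ⟩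
  · obtain ⟨n, hn, h⟩ := hrun.exists_lpsRun_of_cycle hne
    have hT : V.T.card ≤ d * V.T.card ^ (d + 1) + 1 :=
      calc V.T.card ≤ V.T.card ^ (d + 1) := Nat.le_self_pow d.succ_ne_zero _
        _ ≤ d * V.T.card ^ (d + 1) := Nat.le_mul_of_pos_left _ hd
        _ ≤ d * V.T.card ^ (d + 1) + 1 := Nat.le_succ _
    obtain ⟨s, πs, χs, hσ⟩ := (h.mono (Nat.mul_le_mul_left _ hT)).exists_lpsConcat
    exact ⟨n, s, πs, χs, by omega, hσ⟩
end

section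
/- Let X be a finite set of prime numbers and let C be a finite collection of subsets of X. Then there exists a subcollection C' ⊆ C whose members are pairwise disjoint and whose union is X if and only if there exists a subcollection C' ⊆ C with ∏_{c ∈ C'} ∏_{p ∈ c} p = ∏_{p ∈ X} p. (The reduction from ExactCover to PrimeCover: by uniqueness of prime factorization, a product over a subcollection equals the squarefree product of all primes in X exactly when the subcollection is an exact cover of X.) -/
/-!
View a subcollection `C'` as the multiset sum of its members. Both sides of the product equation are
products of multisets of primes, so by unique factorization they agree exactly when this multiset
sum is the underlying multiset of `X`. As `X` has no repeated elements, this says that the members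
of `C'` are pairwise disjoint and have union `X`.
-/

section PairwiseDisjoint

variable {ι α : Type*} {s : Finset ι} {f : ι → Finset α}

theorem pairwiseDisjoint_of_nodup_sum_val (h : (∑ i ∈ s, (f i).val).Nodup) :
    (s : Set ι).PairwiseDisjoint f := by
  intro i hi j hj hij
  have hle : (f i).val + (f j).val ≤ ∑ k ∈ s, (f k).val :=
    Finset.add_le_sum (f := fun k => (f k).val) (fun _ _ => Multiset.zero_le _) hi hj hij
  have hadd : ((f i).val + (f j).val).Nodup := Multiset.nodup_of_le hle h
  exact Finset.disjoint_val.mp (Multiset.nodup_add.mp hadd).2.2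

theorem sum_val_eq_biUnion_val [DecidableEq α] (hf : (s : Set ι).PairwiseDisjoint f) :
    ∑ i ∈ s, (f i).val = (s.biUnion f).val := by
  rw [← Finset.disjiUnion_eq_biUnion s f hf]
  rfl

theorem sum_val_eq_val_iff_pairwiseDisjoint_and_biUnion_eq [DecidableEq α] {t : Finset α} :
    ∑ i ∈ s, (f i).val = t.val ↔ (s : Set ι).PairwiseDisjoint f ∧ s.biUnion f = t := by
  constructor
  · intro h
    have hf : (s : Set ι).PairwiseDisjoint f :=
      pairwiseDisjoint_of_nodup_sum_val (h ▸ t.nodup)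
    exact ⟨hf, Finset.val_injective ((sum_val_eq_biUnion_val hf).symm.trans h)⟩
  · rintro ⟨hf, rfl⟩
    exact sum_val_eq_biUnion_val hf

end PairwiseDisjoint

section PrimeProducts

variable {M : Type*} [CommMonoidWithZero M] [IsCancelMulZero M] [Subsingleton Mˣ]

theorem multiset_prod_eq_prod_iff_of_prime {m n : Multiset M}
    (hm : ∀ p ∈ m, Prime p) (hn : ∀ p ∈ n, Prime p) : m.prod = n.prod ↔ m = n := by
  refine ⟨fun h => ?_, congrArg Multiset.prod⟩
  have hrel : Multiset.Rel Associated m n := prime_factors_unique hm hn (.of_eq h)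
  rwa [associated_eq_eq, Multiset.rel_eq] at hrel

theorem prod_prod_eq_prod_iff_of_prime [DecidableEq M] {ι : Type*} {s : Finset ι}
    {f : ι → Finset M} {t : Finset M}
    (hf : ∀ i ∈ s, ∀ p ∈ f i, Prime p) (ht : ∀ p ∈ t, Prime p) :
    ∏ i ∈ s, ∏ p ∈ f i, p = ∏ p ∈ t, p ↔
      (s : Set ι).PairwiseDisjoint f ∧ s.biUnion f = t := by
  have hsum : ∀ p ∈ ∑ i ∈ s, (f i).val, Prime p := fun p hp =>
    let ⟨i, hi, hpi⟩ := Multiset.mem_sum.mp hp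
    hf i hi p hpi
  calc ∏ i ∈ s, ∏ p ∈ f i, p = ∏ p ∈ t, p
      ↔ (∑ i ∈ s, (f i).val).prod = t.val.prod := by
        simp only [Multiset.prod_sum, Finset.prod_val, id_eq]
    _ ↔ ∑ i ∈ s, (f i).val = t.val := multiset_prod_eq_prod_iff_of_prime hsum ht
    _ ↔ (s : Set ι).PairwiseDisjoint f ∧ s.biUnion f = t :=
        sum_val_eq_val_iff_pairwiseDisjoint_and_biUnion_eq

theorem exactCover_iff_primeCover_general [DecidableEq M] (X : Finset M)
    (hX : ∀ p ∈ X, Prime p) (C : Finset (Finset M)) (hC : ∀ c ∈ C, ∀ p ∈ c, Prime p) :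
    (∃ C' ⊆ C, (∀ c₁ ∈ C', ∀ c₂ ∈ C', c₁ ≠ c₂ → Disjoint c₁ c₂) ∧ C'.biUnion id = X) ↔
      ∃ C' ⊆ C, ∏ c ∈ C', ∏ p ∈ c, p = ∏ p ∈ X, p :=
  exists_congr fun _ => and_congr_right fun hC' =>
    (prod_prod_eq_prod_iff_of_prime (fun c hc => hC c (hC' hc)) hX).symm

end PrimeProducts

/-- ExactCover reduces to PrimeCover. Let `X` be a finite
set of primes and `C` a finite collection of subsets of `X`. Then `C` has a
subcollection of pairwise disjoint sets whose union is `X` iff `C` has a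
subcollection `C'` with `∏_{c ∈ C'} ∏_{p ∈ c} p = ∏_{p ∈ X} p`. -/
theorem exactCover_iff_primeCover (X : Finset ℕ) (hX : ∀ p ∈ X, Nat.Prime p)
    (C : Finset (Finset ℕ)) (hC : ∀ c ∈ C, c ⊆ X) :
    (∃ C' ⊆ C, (∀ c₁ ∈ C', ∀ c₂ ∈ C', c₁ ≠ c₂ → Disjoint c₁ c₂) ∧
        C'.biUnion id = X) ↔
      (∃ C' ⊆ C, ∏ c ∈ C', ∏ p ∈ c, p = ∏ p ∈ X, p) :=
  exactCover_iff_primeCover_general X (fun p hp => (hX p hp).prime) C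
    fun c hc p hp => (hX p (hC c hc hp)).prime
end

section
/- Let d, e ∈ ℕ with d ≥ 2 and e ≥ 1, and let x ∈ ℚ with x > 0. Then there exist rationals α, β with 0 < α ≤ 1 and 0 < β ≤ 1 such that the first coordinate of (x, 0) + α • (-d^e, d^{e+1}) is 0 and the second coordinate of (x, 0) + α • (-d^e, d^{e+1}) + β • (d^e, -d^e) is 0, if and only if x ≤ d^{e-1}; moreover, in that case the coefficients are uniquely determined as α = x/d^e and β = x/d^{e-1}, and the resulting point is (d·x, 0). (Correctness of the multiplier gadget used in the NP-hardness proof for zero-test reachability in dimension 2.) -/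
/-!
Write `q = d ^ e`. The zero tests are linear in `α` and `β`: the first forces `α * q = x`, which
lifts the second coordinate to `α * (q * d) = x * d`, and the second forces `β * q = x * d`, which
moves `x * d` back into the first coordinate. Hence `α` and `β` are determined, and only `α ≤ 1`
and `β ≤ 1` restrict `x`; the latter is the stronger of the two once `1 ≤ d`.
-/

section CommRing

variable {R : Type*} [CommRing R] {q c x α β : R}

/-- The point of the multiplier gadget at its first zero test, reached from `(x, 0)` along the
vector `(-q, q * c)` taken with coefficient `α`; the gadget multiplying by `d` has `c = d` and
`q = d ^ e`. -/
def multiplierMid (q c x α : R) : R × R :=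
  (x, 0) + α • (-q, q * c)

/-- The point of the multiplier gadget at its second zero test, reached from `multiplierMid` along
the vector `(q, -q)` taken with coefficient `β`. -/
def multiplierEnd (q c x α β : R) : R × R :=
  multiplierMid q c x α + β • (q, -q)

/-- The coefficients `α` and `β` pass both zero tests of the multiplier gadget: the test on the
first coordinate after the first vector, and the one on the second coordinate after the second. -/
def PassesZeroTests (q c x α β : R) : Prop :=
  (multiplierMid q c x α).1 = 0 ∧ (multiplierEnd q c x α β).2 = 0

theorem multiplierMid_eq : multiplierMid q c x α = (x - α * q, α * q * c) := by
  ext <;> simp [multiplierMid, sub_eq_add_neg, mul_assoc]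

theorem multiplierEnd_eq :
    multiplierEnd q c x α β = (x - α * q + β * q, α * q * c - β * q) := by
  ext <;> simp [multiplierEnd, multiplierMid_eq, sub_eq_add_neg]

theorem passesZeroTests_iff : PassesZeroTests q c x α β ↔ α * q = x ∧ β * q = x * c := by
  rw [PassesZeroTests, multiplierMid_eq, multiplierEnd_eq, sub_eq_zero, sub_eq_zero,
    eq_comm (a := x), eq_comm (b := β * q)]
  exact and_congr_right fun hα => by rw [hα]

theorem PassesZeroTests.multiplierEnd_eq_mul (h : PassesZeroTests q c x α β) :
    multiplierEnd q c x α β = (c * x, 0) := by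
  obtain ⟨hα, hβ⟩ := passesZeroTests_iff.1 h
  rw [multiplierEnd_eq, hα, hβ, sub_self, sub_self, zero_add, mul_comm]

end CommRing

theorem passesZeroTests_iff_eq_div {K : Type*} [Field K] {q c x α β : K} (hq : q ≠ 0) :
    PassesZeroTests q c x α β ↔ α = x / q ∧ β = x * c / q := by
  rw [passesZeroTests_iff, eq_div_iff hq, eq_div_iff hq]

section LinearOrderedField

variable {K : Type*} [Field K] [LinearOrder K] [IsStrictOrderedRing K] {q c x : K}

theorem exists_passesZeroTests_iff (hc : 0 < c) (hx : 0 < x) :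
    (∃ α β : K, 0 < α ∧ α ≤ 1 ∧ 0 < β ∧ β ≤ 1 ∧ PassesZeroTests q c x α β) ↔
      x ≤ min q (q / c) := by
  rw [le_min_iff, le_div_iff₀ hc]
  constructor
  · rintro ⟨α, β, hα_pos, hα_le, -, hβ_le, htests⟩
    obtain ⟨hα, hβ⟩ := passesZeroTests_iff.1 htests
    have hq : 0 < q := (mul_pos_iff_of_pos_left hα_pos).1 (hα ▸ hx)
    exact ⟨hα ▸ mul_le_of_le_one_left hq.le hα_le, hβ ▸ mul_le_of_le_one_left hq.le hβ_le⟩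
  · rintro ⟨hxq, hxcq⟩
    have hq : 0 < q := hx.trans_le hxq
    exact ⟨x / q, x * c / q, by positivity, (div_le_one hq).2 hxq, by positivity,
      (div_le_one hq).2 hxcq, (passesZeroTests_iff_eq_div hq.ne').2 ⟨rfl, rfl⟩⟩

theorem multiplier_gadget_general (hc : 0 < c) (hx : 0 < x) :
    ((∃ α β : K, 0 < α ∧ α ≤ 1 ∧ 0 < β ∧ β ≤ 1 ∧ PassesZeroTests q c x α β) ↔
      x ≤ min q (q / c)) ∧
    ∀ α β : K, PassesZeroTests q c x α β →
      α = x / q ∧ β = x / (q / c) ∧ multiplierEnd q c x α β = (c * x, 0) := by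
  refine ⟨exists_passesZeroTests_iff hc hx, fun α β htests => ?_⟩
  have hq : q ≠ 0 := right_ne_zero_of_mul ((passesZeroTests_iff.1 htests).1.trans_ne hx.ne')
  obtain ⟨hα, hβ⟩ := (passesZeroTests_iff_eq_div hq).1 htests
  exact ⟨hα, by rw [hβ, div_div_eq_mul_div], htests.multiplierEnd_eq_mul⟩

end LinearOrderedField

/-- correctness of the multiplier gadget. Let `d ≥ 2`,
`e ≥ 1` and `x > 0` a rational. There exist coefficients `α, β ∈ (0,1]` such
that the first coordinate of `(x,0) + α • (-d^e, d^(e+1))` is `0` and the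
second coordinate of `(x,0) + α • (-d^e, d^(e+1)) + β • (d^e, -d^e)` is `0`,
iff `x ≤ d^(e-1)`; moreover, in that case the coefficients are uniquely
determined as `α = x/d^e` and `β = x/d^(e-1)`, and the resulting point is
`(d·x, 0)`. -/
theorem multiplier_gadget (d e : ℕ) (hd : 2 ≤ d) (he : 1 ≤ e)
    (x : ℚ) (hx : 0 < x) :
    ((∃ α β : ℚ, 0 < α ∧ α ≤ 1 ∧ 0 < β ∧ β ≤ 1 ∧
        (((x, 0) : ℚ × ℚ) + α • ((-(d : ℚ) ^ e, (d : ℚ) ^ (e + 1)) : ℚ × ℚ)).1 = 0 ∧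
        (((x, 0) : ℚ × ℚ) + α • ((-(d : ℚ) ^ e, (d : ℚ) ^ (e + 1)) : ℚ × ℚ) +
            β • (((d : ℚ) ^ e, -(d : ℚ) ^ e) : ℚ × ℚ)).2 = 0) ↔
      x ≤ (d : ℚ) ^ (e - 1)) ∧
    (x ≤ (d : ℚ) ^ (e - 1) →
      ∀ α β : ℚ, 0 < α → α ≤ 1 → 0 < β → β ≤ 1 →
        (((x, 0) : ℚ × ℚ) + α • ((-(d : ℚ) ^ e, (d : ℚ) ^ (e + 1)) : ℚ × ℚ)).1 = 0 →
        (((x, 0) : ℚ × ℚ) + α • ((-(d : ℚ) ^ e, (d : ℚ) ^ (e + 1)) : ℚ × ℚ) +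
            β • (((d : ℚ) ^ e, -(d : ℚ) ^ e) : ℚ × ℚ)).2 = 0 →
        α = x / (d : ℚ) ^ e ∧ β = x / (d : ℚ) ^ (e - 1) ∧
        ((x, 0) : ℚ × ℚ) + α • ((-(d : ℚ) ^ e, (d : ℚ) ^ (e + 1)) : ℚ × ℚ) +
            β • (((d : ℚ) ^ e, -(d : ℚ) ^ e) : ℚ × ℚ) = ((d : ℚ) * x, 0)) := by
  have hd_one : (1 : ℚ) ≤ d := mod_cast one_le_two.trans hd
  have hd_pos : (0 : ℚ) < d := one_pos.trans_le hd_one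
  have hdiv : (d : ℚ) ^ e / d = d ^ (e - 1) := by
    rw [← pow_sub_one_mul (Nat.one_le_iff_ne_zero.1 he), mul_div_cancel_right₀ _ hd_pos.ne']
  have hgeneral := multiplier_gadget_general (q := (d : ℚ) ^ e) hd_pos hx
  rw [min_eq_right (div_le_self (by positivity) hd_one), hdiv] at hgeneral
  rw [pow_succ]
  exact ⟨hgeneral.1, fun _ α β _ _ _ _ hα hβ => hgeneral.2 α β ⟨hα, hβ⟩⟩
end
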